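/- Let f be a nontrivial rotation of the plane about a center P ∈ ℝ² (i.e., f(x) = P + R(x − P) with R ∈ SO(2), R ≠ I), and let S ⊆ ℝ² be a finite set with f(S) = S that contains at least one point different from P. Then f has finite order at most |S|: there exists an integer k with 1 ≤ k ≤ |S| such that the k-fold composition f^k is the identity map of ℝ². In particular, the rotation angle of f is a rational multiple of 2π. -/

import Mathlib

open Polynomial Matrix RealInnerProductSpace

noncomputable section

theorem so2_fixed (M : Matrix (Fin 2) (Fin 2) ℝ)
    (hM : M ∈ Matrix.specialOrthogonalGroup (Fin 2) ℝ) (v : Fin 2 → ℝ) (hv : v ≠ 0)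
    (h : M.mulVec v = v) : M = 1 := by
  rw [Matrix.mem_specialOrthogonalGroup_iff, Matrix.mem_orthogonalGroup_iff] at hM
  obtain ⟨ho, hd⟩ := hM
  have hdet : (M - 1).det = 0 := by
    rw [← Matrix.exists_mulVec_eq_zero_iff]
    exact ⟨v, hv, by rw [Matrix.sub_mulVec, h, Matrix.one_mulVec, sub_self]⟩
  have h00 := congrFun (congrFun ho 0) 0
  have h11 := congrFun (congrFun ho 1) 1
  rw [Matrix.det_fin_two] at hd hdet
  simp [Matrix.mul_apply, Fin.sum_univ_two, Matrix.star_apply] at h00 h11 hdet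
  have htr : M 0 0 + M 1 1 = 2 := by linarith
  have a1 : M 0 0 = 1 := by nlinarith [sq_nonneg (M 0 1), sq_nonneg (M 1 0), sq_nonneg (M 0 0 - 1), sq_nonneg (M 1 1 - 1)]
  have d1 : M 1 1 = 1 := by linarith
  have b0 : M 0 1 = 0 := by rw [a1] at h00; exact mul_self_eq_zero.mp (by linarith)
  have c0 : M 1 0 = 0 := by rw [d1] at h11; exact mul_self_eq_zero.mp (by linarith)
  ext i j
  fin_cases i <;> fin_cases j <;> simp [a1, b0, c0, d1]

/-- Let `f` be a nontrivial rotation of the plane about a center `P ∈ ℝ²`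
(i.e., `f(x) = P + R(x − P)` with `R ∈ SO(2)`, `R ≠ I`), and let `S ⊆ ℝ²` be a finite set with
`f(S) = S` containing at least one point different from `P`. Then `f` has finite order at most
`|S|`: there exists an integer `k` with `1 ≤ k ≤ |S|` such that the `k`-fold composition `f^k`
is the identity map of `ℝ²`. -/
theorem statement_16 (P : EuclideanSpace ℝ (Fin 2)) (R : Matrix (Fin 2) (Fin 2) ℝ)
    (hR : R ∈ Matrix.specialOrthogonalGroup (Fin 2) ℝ) (hR1 : R ≠ 1)
    (f : EuclideanSpace ℝ (Fin 2) → EuclideanSpace ℝ (Fin 2))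
    (hf : ∀ x i, f x i = P i + R.mulVec (fun j => x j - P j) i)
    (S : Set (EuclideanSpace ℝ (Fin 2))) (hS : S.Finite) (hfS : f '' S = S)
    (hpt : ∃ y ∈ S, y ≠ P) :
    ∃ k : ℕ, 1 ≤ k ∧ k ≤ S.ncard ∧ f^[k] = id := by
  obtain ⟨y, hy, hyP⟩ := hpt
  have hit : ∀ (n : ℕ) x, (fun j => f^[n] x j - P j) = (R ^ n).mulVec (fun j => x j - P j) := by
    intro n x
    induction n with
    | zero => simp
    | succ n ih =>
      rw [Function.iterate_succ_apply', pow_succ', ← Matrix.mulVec_mulVec, ← ih]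
      funext i
      rw [hf]; ring
  have hmem : ∀ n : ℕ, f^[n] y ∈ S := by
    intro n
    induction n with
    | zero => exact hy
    | succ n ih =>
      rw [Function.iterate_succ_apply', ← hfS]
      exact ⟨_, ih, rfl⟩
  have hinj : Function.Injective f := by
    intro a b hab
    have hu : IsUnit R := by
      rw [Matrix.isUnit_iff_isUnit_det, (Matrix.mem_specialOrthogonalGroup_iff.mp hR).2]
      exact isUnit_one
    have h1 := hit 1 a
    have h2 := hit 1 b
    simp only [Function.iterate_one, pow_one, hab] at h1 h2
    have h3 := Matrix.mulVec_injective_of_isUnit hu (h1.symm.trans h2)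
    ext i
    simpa using congrFun h3 i
  obtain ⟨i, hi, j, hj, hij, he⟩ : ∃ i ∈ Finset.range (S.ncard + 1),
      ∃ j ∈ Finset.range (S.ncard + 1), i ≠ j ∧ f^[i] y = f^[j] y := by
    apply Finset.exists_ne_map_eq_of_card_lt_of_maps_to (t := hS.toFinset)
    · rw [Finset.card_range, Set.ncard_eq_toFinset_card S hS]; omega
    · intro n _
      simpa using hmem n
  wlog hlt : i < j generalizing i j
  · exact this j hj i hi hij.symm he.symm (by omega)
  simp only [Finset.mem_range] at hi hj
  have hfix : f^[j - i] y = y := by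
    apply hinj.iterate i
    rw [← Function.iterate_add_apply, Nat.add_sub_cancel' hlt.le, he]
  have hk := hit (j - i) y
  rw [hfix] at hk
  have hone : R ^ (j - i) = 1 := by
    refine so2_fixed _ (pow_mem hR _) _ ?_ hk.symm
    intro h0
    apply hyP
    ext t
    have := congrFun h0 t
    simp only [Pi.zero_apply] at this
    linarith
  refine ⟨j - i, by omega, by omega, ?_⟩
  funext x
  have hx := hit (j - i) x
  rw [hone, Matrix.one_mulVec] at hx
  ext t
  simpa using congrFun hx t
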